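/- arXiv:2206.01558 — 4 statements merged into one kernel-verified Lean document; each statement's English description precedes it below -/
import Mathlib

section
/- Let f : ℝ^D → ℝ^H be piecewise affine with respect to a finite cover of ℝ^D by convex sets Q_1, …, Q_R, meaning ⋃_l Q_l = ℝ^D and for each l there are a linear map V_l : ℝ^D → ℝ^H and a vector a_l ∈ ℝ^H with f(x) = V_l x + a_l for all x ∈ Q_l. Then for every x ∈ ℝ^D there exist δ* > 0, a linear map V : ℝ^D → ℝ^H, and a vector a ∈ ℝ^H such that f(δ·x) = δ·(V x) + a for all δ > δ*. -/
/-! A ray pulls a convex set back to an interval of parameters, and an interval that meets every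
neighbourhood of `+∞` contains one. Since there are finitely many pieces, one of them is met at
arbitrarily large parameters, so the tail of the ray stays inside that piece. -/

section Order

open Filter Set

variable {α : Type*} [Preorder α] [IsDirectedOrder α] [Nonempty α]

theorem eventually_atTop_mem_of_ordConnected {s : Set α} (hs : s.OrdConnected)
    (hfreq : ∃ᶠ t in atTop, t ∈ s) : ∀ᶠ t in atTop, t ∈ s := by
  obtain ⟨u, hu⟩ := hfreq.exists
  filter_upwards [eventually_ge_atTop u] with t hut
  obtain ⟨v, htv, hv⟩ := frequently_atTop.mp hfreq t
  exact hs.out hu hv ⟨hut, htv⟩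

theorem exists_eventually_atTop_mem_of_frequently_mem_iUnion {ι : Type*} [Finite ι]
    {s : ι → Set α} (hs : ∀ i, (s i).OrdConnected) (hfreq : ∃ᶠ t in atTop, t ∈ ⋃ i, s i) :
    ∃ i, ∀ᶠ t in atTop, t ∈ s i := by
  simp only [mem_iUnion, frequently_exists] at hfreq
  exact hfreq.imp fun i hi ↦ eventually_atTop_mem_of_ordConnected (hs i) hi

end Order

section Ray

open Filter Set

variable {𝕜 E F : Type*} [Field 𝕜] [LinearOrder 𝕜] [IsStrictOrderedRing 𝕜]
  [AddCommGroup E] [Module 𝕜 E] [AddCommGroup F] [Module 𝕜 F]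

theorem ordConnected_preimage_add_smul {s : Set E} (hs : Convex 𝕜 s) (p x : E) :
    ((fun δ : 𝕜 ↦ p + δ • x) ⁻¹' s).OrdConnected :=
  ((hs.translate_preimage_right p).linear_preimage
    (LinearMap.toSpanSingleton 𝕜 E x)).ordConnected

theorem piecewise_affine_ray_eventually_affine_general {ι : Type*} [Finite ι]
    {Q : ι → Set E} {V : ι → E →ₗ[𝕜] F} {a : ι → F} {f : E → F}
    (hconv : ∀ l, Convex 𝕜 (Q l)) (hf : ∀ l, ∀ y ∈ Q l, f y = V l y + a l)
    {p x : E} (hfreq : ∃ᶠ δ : 𝕜 in atTop, p + δ • x ∈ ⋃ l, Q l) :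
    ∃ l, ∀ᶠ δ : 𝕜 in atTop, f (p + δ • x) = δ • V l x + (V l p + a l) := by
  have hpreimage : ∃ᶠ δ : 𝕜 in atTop, δ ∈ ⋃ l, (fun δ ↦ p + δ • x) ⁻¹' Q l := by
    rwa [← preimage_iUnion]
  obtain ⟨l, hl⟩ := exists_eventually_atTop_mem_of_frequently_mem_iUnion
    (fun l ↦ ordConnected_preimage_add_smul (hconv l) p x) hpreimage
  refine ⟨l, hl.mono fun δ hδ ↦ ?_⟩
  calc
    f (p + δ • x) = V l (p + δ • x) + a l := hf l _ hδ
    _ = δ • V l x + (V l p + a l) := by rw [map_add, map_smul]; abel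

end Ray

/-- A piecewise affine map (w.r.t. a finite convex cover of `ℝ^D`) agrees, along any ray
`δ • x`, eventually with a single affine map of the ray parameter. -/
theorem piecewise_affine_ray_eventually_affine
    (D H R : ℕ)
    (Q : Fin R → Set (EuclideanSpace ℝ (Fin D)))
    (V : Fin R → (EuclideanSpace ℝ (Fin D) →ₗ[ℝ] EuclideanSpace ℝ (Fin H)))
    (a : Fin R → EuclideanSpace ℝ (Fin H))
    (f : EuclideanSpace ℝ (Fin D) → EuclideanSpace ℝ (Fin H))
    (hconv : ∀ l, Convex ℝ (Q l))
    (hcover : (⋃ l, Q l) = Set.univ)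
    (hf : ∀ l, ∀ x ∈ Q l, f x = V l x + a l) :
    ∀ x : EuclideanSpace ℝ (Fin D),
      ∃ δstar : ℝ, 0 < δstar ∧
        ∃ (W : EuclideanSpace ℝ (Fin D) →ₗ[ℝ] EuclideanSpace ℝ (Fin H))
          (b : EuclideanSpace ℝ (Fin H)),
          ∀ δ : ℝ, δstar < δ → f (δ • x) = δ • (W x) + b := by
  intro x
  obtain ⟨l, hl⟩ := piecewise_affine_ray_eventually_affine_general hconv hf (p := 0) (x := x)
    (.of_forall fun δ : ℝ ↦ hcover ▸ Set.mem_univ _)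
  obtain ⟨δstar, hpos, hδstar⟩ := (Filter.atTop_basis_Ioi' (0 : ℝ)).eventually_iff.mp hl
  exact ⟨δstar, hpos, V l, a l, fun δ hδ ↦ by simpa using hδstar hδ⟩
end

section
/- Let f : ℝ^D → ℝ^H be piecewise affine with respect to a finite cover of ℝ^D by convex sets Q_1, …, Q_R, with affine pieces f(x) = V_l x + a_l on Q_l. Let x ∈ ℝ^D be such that V_l x ≠ 0 for every l ∈ {1, …, R}. Then ‖f(δ·x)‖ → ∞ as δ → ∞. -/
open Filter

open Bornology (cobounded)

/-!
For each piece `l`, the map `δ ↦ V l (δ • x) + a l = δ • V l x + a l` escapes every bounded set,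
since `V l x ≠ 0`. There are finitely many pieces, so they all escape a given bounded set for `δ`
large, and `f (δ • x)` is always the value of one of them, whichever piece the ray is in.
-/

theorem tendsto_of_eventually_exists_eq {ι α β : Type*} [Finite ι] {l : Filter α} {l' : Filter β}
    {f : α → β} {g : ι → α → β} (hg : ∀ i, Tendsto (g i) l l')
    (hfg : ∀ᶠ t in l, ∃ i, f t = g i t) : Tendsto f l l' := by
  refine tendsto_iff_forall_eventually_mem.2 fun s hs ↦ ?_
  have hall : ∀ᶠ t in l, ∀ i, g i t ∈ s := eventually_all.2 fun i ↦ (hg i).eventually_mem hs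
  filter_upwards [hall, hfg] with t ht ⟨i, hi⟩ using hi ▸ ht i

section NormedSpace

variable {𝕜 E F : Type*} [NormedField 𝕜] [AddCommMonoid E] [Module 𝕜 E]
  [NormedAddCommGroup F] [NormedSpace 𝕜 F]

theorem tendsto_smul_const_cobounded {v : F} (hv : v ≠ 0) :
    Tendsto (fun c : 𝕜 ↦ c • v) (cobounded 𝕜) (cobounded F) := by
  rw [← tendsto_norm_atTop_iff_cobounded]
  simp only [norm_smul]
  exact tendsto_norm_cobounded_atTop.atTop_mul_const (norm_pos_iff.2 hv)

theorem tendsto_map_smul_add_const_cobounded (V : E →ₗ[𝕜] F) (a : F) {x : E} (hx : V x ≠ 0) :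
    Tendsto (fun c : 𝕜 ↦ V (c • x) + a) (cobounded 𝕜) (cobounded F) := by
  simp only [map_smul]
  exact (tendsto_add_const_cobounded a).comp (tendsto_smul_const_cobounded hx)

theorem piecewise_affine_norm_tendsto_atTop_general {ι : Type*} [Finite ι]
    {Q : ι → Set E} {V : ι → E →ₗ[𝕜] F} {a : ι → F} {f : E → F}
    (hcover : ⋃ l, Q l = Set.univ) (hf : ∀ l, ∀ x ∈ Q l, f x = V l x + a l)
    {x : E} (hx : ∀ l, V l x ≠ 0) :
    Tendsto (fun c : 𝕜 ↦ ‖f (c • x)‖) (cobounded 𝕜) atTop := by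
  have hpiece (c : 𝕜) : ∃ l, f (c • x) = V l (c • x) + a l :=
    (Set.iUnion_eq_univ_iff.1 hcover (c • x)).imp fun l hl ↦ hf l _ hl
  exact tendsto_norm_cobounded_atTop.comp <| tendsto_of_eventually_exists_eq
    (fun l ↦ tendsto_map_smul_add_const_cobounded (V l) (a l) (hx l)) (.of_forall hpiece)

end NormedSpace

/-- Lemma A.2: for a piecewise affine map `f` (w.r.t. a finite convex cover of `ℝ^D`)
and any `x` with `V l x ≠ 0` for every piece `l`, the latent norm `‖f (δ • x)‖`
tends to infinity as `δ → ∞`. -/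
theorem piecewise_affine_norm_tendsto_atTop
    (D H R : ℕ)
    (Q : Fin R → Set (EuclideanSpace ℝ (Fin D)))
    (V : Fin R → (EuclideanSpace ℝ (Fin D) →ₗ[ℝ] EuclideanSpace ℝ (Fin H)))
    (a : Fin R → EuclideanSpace ℝ (Fin H))
    (f : EuclideanSpace ℝ (Fin D) → EuclideanSpace ℝ (Fin H))
    (hconv : ∀ l, Convex ℝ (Q l))
    (hcover : (⋃ l, Q l) = Set.univ)
    (hf : ∀ l, ∀ x ∈ Q l, f x = V l x + a l)
    (x : EuclideanSpace ℝ (Fin D))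
    (hx : ∀ l, V l x ≠ 0) :
    Tendsto (fun δ : ℝ => ‖f (δ • x)‖) atTop atTop :=
  (piecewise_affine_norm_tendsto_atTop_general hcover hf hx).mono_left
    IsOrderBornology.atTop_le_cobounded
end

section
/- Let g : ℝ → ℝ satisfy g(r) → 0 as r → ∞, and define a stationary kernel on ℝ^H by κ(u, v) = g(‖u − v‖). Fix inducing points φ_1, …, φ_K ∈ ℝ^H and a matrix C ∈ ℝ^{K×K}, and define the predictive variance σ(z) = g(0) − Σ_{k,k'=1}^K κ(z, φ_k) · C_{k k'} · κ(z, φ_{k'}) for z ∈ ℝ^H. Then for any sequence (or filter) of points z with ‖z‖ → ∞, we have σ(z) → g(0) = κ(0, 0). -/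
open Filter
open Bornology Topology

theorem tendsto_sum_sum_mul_mul_zero {α ι R : Type*} [Fintype ι]
    [NonUnitalNonAssocSemiring R] [TopologicalSpace R] [IsTopologicalSemiring R]
    {l : Filter α} {f : ι → α → R} (C : Matrix ι ι R) (hf : ∀ i, Tendsto (f i) l (𝓝 0)) :
    Tendsto (fun x => ∑ i, ∑ j, f i x * C i j * f j x) l (𝓝 0) := by
  have hsum : Tendsto (fun x => ∑ i, ∑ j, f i x * C i j * f j x) l
      (𝓝 (∑ i, ∑ j, 0 * C i j * 0)) :=
    tendsto_finsetSum _ fun i _ => tendsto_finsetSum _ fun j _ => ((hf i).mul_const _).mul (hf j)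
  simpa only [mul_zero, Finset.sum_const_zero] using hsum

theorem predictive_variance_tendsto_prior_general {X ι R : Type*} [PseudoMetricSpace X]
    [Fintype ι] [NonUnitalNonAssocRing R] [TopologicalSpace R] [IsTopologicalRing R]
    {g : ℝ → R} (hg : Tendsto g atTop (𝓝 0))
    {κ : X → X → R} (hκ : ∀ u v, κ u v = g (dist u v))
    (φ : ι → X) (C : Matrix ι ι R) {σ : X → R}
    (hσ : ∀ z, σ z = g 0 - ∑ k, ∑ k', κ z (φ k) * C k k' * κ z (φ k')) :
    Tendsto σ (cobounded X) (𝓝 (g 0)) ∧ ∀ x, g 0 = κ x x := by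
  have kernel_tendsto_zero (k : ι) : Tendsto (fun z => κ z (φ k)) (cobounded X) (𝓝 0) := by
    simp only [hκ]
    exact hg.comp (Metric.tendsto_dist_right_cobounded_atTop (φ k))
  have variance_tendsto : Tendsto σ (cobounded X) (𝓝 (g 0 - 0)) := by
    simpa only [funext hσ] using
      tendsto_const_nhds.sub (tendsto_sum_sum_mul_mul_zero C kernel_tendsto_zero)
  exact ⟨by simpa only [sub_zero] using variance_tendsto, fun x => by rw [hκ, dist_self]⟩

/-- For a stationary kernel `κ u v = g ‖u - v‖` whose profile `g` vanishes at infinity,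
the GP predictive variance `σ z = κ 0 0 - ∑ k k', κ z (φ k) * C k k' * κ z (φ k')`
tends to the prior variance `κ 0 0 = g 0` as `‖z‖ → ∞`. -/
theorem predictive_variance_tendsto_prior
    (H K : ℕ)
    (g : ℝ → ℝ) (hg : Tendsto g atTop (nhds 0))
    (κ : EuclideanSpace ℝ (Fin H) → EuclideanSpace ℝ (Fin H) → ℝ)
    (hκ : ∀ u v, κ u v = g ‖u - v‖)
    (φ : Fin K → EuclideanSpace ℝ (Fin H))
    (C : Matrix (Fin K) (Fin K) ℝ)
    (σ : EuclideanSpace ℝ (Fin H) → ℝ)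
    (hσ : ∀ z, σ z = g 0 - ∑ k : Fin K, ∑ k' : Fin K, κ z (φ k) * C k k' * κ z (φ k')) :
    Tendsto σ (comap norm atTop) (nhds (g 0)) ∧ g 0 = κ 0 0 := by
  have hκ_dist : ∀ u v, κ u v = g (dist u v) := by simpa only [dist_eq_norm] using hκ
  simpa only [comap_norm_atTop] using
    (predictive_variance_tendsto_prior_general hg hκ_dist φ C hσ).imp_right (· 0)
end

section
/- Let f : ℝ^D → ℝ^H be piecewise affine with respect to a finite cover of ℝ^D by convex sets Q_1, …, Q_R, with affine pieces f(x) = V_l x + a_l on Q_l, and let x ∈ ℝ^D satisfy V_l x ≠ 0 for every l. Let p : ℝ^H → ℝ be Lebesgue integrable and Lipschitz continuous. Then p(f(δ·x)) → 0 as δ → ∞. -/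
open Filter MeasureTheory

/-!
Whenever `ε ≤ ‖p c‖`, uniform continuity keeps `‖p‖` above `ε / 2` on a ball around `c` of radius
independent of `c`, hence of measure independent of `c`. The set `{ε / 2 ≤ ‖p‖}` has finite
measure by Markov's inequality, so it can contain no such ball far from the origin; thus `p`
vanishes at infinity. Along a ray each affine piece `δ ↦ δ • V l x + a l` escapes to infinity, and
since there are finitely many pieces, so does `f (δ • x)`.
-/

open Bornology Metric
open scoped Topology ENNReal NNReal

section FiniteMeasure

variable {X : Type*} [PseudoMetricSpace X]

instance isCountablyGenerated_cobounded : (cobounded X).IsCountablyGenerated := by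
  rcases isEmpty_or_nonempty X with hX | ⟨⟨c⟩⟩
  · rw [filter_eq_bot_of_isEmpty (cobounded X)]
    infer_instance
  · rw [← comap_dist_right_atTop c]
    infer_instance

theorem tendsto_measure_ball_cobounded [MeasurableSpace X] [OpensMeasurableSpace X]
    (μ : Measure X) [IsFiniteMeasure μ] (r : ℝ) :
    Tendsto (fun c => μ (ball c r)) (cobounded X) (𝓝 0) := by
  have eventually_notMem (x : X) : ∀ᶠ c in cobounded X, x ∈ ball c r ↔ x ∈ (∅ : Set X) := by
    filter_upwards [isBounded_ball (x := x) (r := r)] with c hc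
    simpa only [Set.mem_empty_iff_false, iff_false, mem_ball_comm, Set.mem_compl_iff] using hc
  simpa only [measure_empty] using
    tendsto_measure_of_tendsto_indicator_of_isFiniteMeasure (cobounded X) μ
      (fun _ => measurableSet_ball) eventually_notMem

end FiniteMeasure

section InvariantMeasure

variable {F G : Type*} [SeminormedAddCommGroup F] [MeasurableSpace F] [BorelSpace F]
  [SeminormedAddCommGroup G] {μ : Measure F} [μ.IsAddLeftInvariant]

theorem measure_ball_eq_measure_ball_zero (c : F) (r : ℝ) : μ (ball c r) = μ (ball 0 r) := by
  rw [← measure_preimage_add μ c (ball c r), preimage_add_ball, sub_self]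

variable [μ.IsOpenPosMeasure] {p : F → G}

theorem tendsto_cobounded_zero_of_measure_norm_ge_lt_top (hp : UniformContinuous p)
    (hfin : ∀ ε > 0, μ {z | ε ≤ ‖p z‖} < ∞) : Tendsto p (cobounded F) (𝓝 0) := by
  rw [Metric.tendsto_nhds]
  intro ε hε
  obtain ⟨r, hr, hpr⟩ := Metric.uniformContinuous_iff.1 hp (ε / 2) (half_pos hε)
  set S : Set F := {z | ε / 2 ≤ ‖p z‖}
  have ball_subset {c : F} (hc : ε ≤ ‖p c‖) : ball c r ⊆ S := fun z hz => by
    have hclose : ‖p c - p z‖ < ε / 2 := by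
      simpa only [dist_eq_norm] using hpr (mem_ball'.1 hz)
    have htriangle := norm_sub_norm_le (p c) (p z)
    change ε / 2 ≤ ‖p z‖
    linarith
  have : Fact (μ S < ∞) := ⟨hfin (ε / 2) (half_pos hε)⟩
  filter_upwards [(tendsto_measure_ball_cobounded (μ.restrict S) r).eventually_lt_const
    (measure_ball_pos μ 0 hr)] with c hc
  rw [dist_zero_right]
  contrapose! hc
  rw [Measure.restrict_eq_self μ (ball_subset hc), measure_ball_eq_measure_ball_zero c]

theorem tendsto_cobounded_zero_of_memLp (hp : UniformContinuous p) {q : ℝ≥0∞} (hq₀ : q ≠ 0)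
    (hq : q ≠ ∞) (hpq : MemLp p q μ) : Tendsto p (cobounded F) (𝓝 0) :=
  tendsto_cobounded_zero_of_measure_norm_ge_lt_top hp fun ε hε => by
    lift ε to ℝ≥0 using hε.le
    simpa only [enorm_eq_nnnorm, ENNReal.coe_le_coe, ← NNReal.coe_le_coe, coe_nnnorm] using
      hpq.meas_ge_lt_top_enorm hq₀ hq (NNReal.coe_pos.1 hε).ne'

end InvariantMeasure

theorem tendsto_smul_add_const_cobounded {𝕜 F : Type*} [NormedField 𝕜] [NormedAddCommGroup F]
    [NormedSpace 𝕜 F] {v : F} (hv : v ≠ 0) (b : F) :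
    Tendsto (fun t : 𝕜 => t • v + b) (cobounded 𝕜) (cobounded F) := by
  have hne : b ≠ v + b := by simpa using hv
  refine (antilipschitzWith_lineMap (𝕜 := 𝕜) hne).tendsto_cobounded.congr fun t => ?_
  simp [AffineMap.lineMap_apply]

theorem tendsto_of_finite_pieces {α β ι : Type*} [Finite ι] {l : Filter α} {l' : Filter β}
    {u : α → β} {g : ι → α → β} (hg : ∀ i, Tendsto (g i) l l')
    (hu : ∀ᶠ t in l, ∃ i, u t = g i t) : Tendsto u l l' := by
  refine tendsto_iff_eventually.2 fun P hP => ?_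
  filter_upwards [eventually_all.2 fun i => (hg i).eventually hP, hu] with t ht ⟨i, hi⟩
  exact hi ▸ ht i

section PiecewiseAffine

variable {𝕜 E F ι : Type*} [NormedField 𝕜] [AddCommGroup E] [Module 𝕜 E] [NormedAddCommGroup F]
  [NormedSpace 𝕜 F] [Finite ι] {Q : ι → Set E} {V : ι → E →ₗ[𝕜] F} {a : ι → F} {f : E → F}

theorem tendsto_piecewiseAffine_smul_cobounded (hcover : (⋃ l, Q l) = Set.univ)
    (hf : ∀ l, ∀ x ∈ Q l, f x = V l x + a l) {x : E} (hx : ∀ l, V l x ≠ 0) :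
    Tendsto (fun δ : 𝕜 => f (δ • x)) (cobounded 𝕜) (cobounded F) := by
  refine tendsto_of_finite_pieces (fun l => tendsto_smul_add_const_cobounded (hx l) (a l))
    (Eventually.of_forall fun δ => ?_)
  obtain ⟨l, hl⟩ := Set.iUnion_eq_univ_iff.1 hcover (δ • x)
  exact ⟨l, by rw [hf l _ hl, map_smul]⟩

theorem natpn_evidence_tendsto_zero_general {G : Type*} [SeminormedAddCommGroup G]
    [MeasurableSpace F] [BorelSpace F] {μ : Measure F} [μ.IsAddLeftInvariant] [μ.IsOpenPosMeasure]
    (hcover : (⋃ l, Q l) = Set.univ) (hf : ∀ l, ∀ x ∈ Q l, f x = V l x + a l)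
    {x : E} (hx : ∀ l, V l x ≠ 0) {p : F → G} (hp : UniformContinuous p)
    {q : ℝ≥0∞} (hq₀ : q ≠ 0) (hq : q ≠ ∞) (hpq : MemLp p q μ) :
    Tendsto (fun δ : 𝕜 => p (f (δ • x))) (cobounded 𝕜) (𝓝 0) :=
  (tendsto_cobounded_zero_of_memLp hp hq₀ hq hpq).comp
    (tendsto_piecewiseAffine_smul_cobounded hcover hf hx)

end PiecewiseAffine

/-- Theorem A.2: the density (evidence) `p (f (δ • x))` of a Natural Posterior Network
vanishes along rays `δ • x` as `δ → ∞`, for a piecewise affine encoder `f`, an input `x`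
with `V l x ≠ 0` for all pieces `l`, and an integrable Lipschitz density `p`. -/
theorem natpn_evidence_tendsto_zero
    (D H R : ℕ)
    (Q : Fin R → Set (EuclideanSpace ℝ (Fin D)))
    (V : Fin R → (EuclideanSpace ℝ (Fin D) →ₗ[ℝ] EuclideanSpace ℝ (Fin H)))
    (a : Fin R → EuclideanSpace ℝ (Fin H))
    (f : EuclideanSpace ℝ (Fin D) → EuclideanSpace ℝ (Fin H))
    (hconv : ∀ l, Convex ℝ (Q l))
    (hcover : (⋃ l, Q l) = Set.univ)
    (hf : ∀ l, ∀ x ∈ Q l, f x = V l x + a l)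
    (x : EuclideanSpace ℝ (Fin D))
    (hx : ∀ l, V l x ≠ 0)
    (p : EuclideanSpace ℝ (Fin H) → ℝ)
    (hint : Integrable p volume)
    (L : NNReal) (hLip : LipschitzWith L p) :
    Tendsto (fun δ : ℝ => p (f (δ • x))) atTop (nhds 0) := by
  exact (natpn_evidence_tendsto_zero_general hcover hf hx hLip.uniformContinuous one_ne_zero
    ENNReal.one_ne_top (memLp_one_iff_integrable.2 hint)).mono_left
      IsOrderBornology.atTop_le_cobounded
end
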